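/- Explicit gain threshold for the PI dynamics (Theorem 4). In the setting of Theorem 3 (hypotheses (i)–(v) with constants m̲, m̄, ρ_η, L_Φ, L_Ψ, L₁, L₂, and λ* = φ(x*)), set L_r = m̄ L₂ L_Ψ and κ = 12 L_r/m̲ + 64 L_r²/m̲² + 8 L₁² L_r/(ρ_η² m̲) + 128 L₁² L_r²/(ρ_η² m̲²). Then for every k_p and k_i with k_p ≥ max{1, 2k_i/(k_p m̲), κ}, 0 < k_i ≤ m̲ k_p²/2, there exist c_π > 0 and ρ_π > 0 such that every pair of differentiable curves x : [0,∞) → E, z : [0,∞) → F₁ satisfying x'(t) = −∇f(x(t)) − Dh(x(t))†( k_p h(x(t)) + k_i z(t) ) and z'(t) = h(x(t)) obeys, with λ(t) = k_p h(x(t)) + k_i z(t), the bound ‖(x(t) − x*, λ(t) − λ*)‖ ≤ c_π e^{−ρ_π t} ‖(x(0) − x*, λ(0) − λ*)‖ for all t ≥ 0. -/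

import Mathlib

open scoped RealInnerProductSpace

/-!
In the coordinates `y = h(x)`, `η = q(x)` the tangential and normal parts of the flow decouple:
`Dq` annihilates the constraint force, so `η` performs gradient descent on the strongly convex `f̃`
up to an error of size `L₁‖y‖`, while `Dh(x)(-∇f(x) - Dh(x)†λ) = -Dh(x)Dh(x)†(λ - φ(x))` with
`φ` the least-squares multiplier. After rescaling `y` by `k_p` and `η - η*` by `k_p ρ_η / L₁`, the
errors `w = λ - λ*`, `y`, `e` obey sector bounds in which the gain condition
`12 (L_r / m̲) max(1, L₁ / ρ_η) ≤ k_p` appears as a single factor `1/12`. The energy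
`(2/μ)‖w‖² + ‖e‖²/(6ρ) + ‖w - y‖²/σ` then decays exponentially; its last term uses that
`w - y = k_i z - λ*` is the integrator state, whose derivative is proportional to `y`.
-/

section Dissipation

variable {F₁ F₂ : Type*} [NormedAddCommGroup F₁] [InnerProductSpace ℝ F₁]
  [NormedAddCommGroup F₂]

lemma le_mul_exp_of_hasDerivWithinAt_le {V V' : ℝ → ℝ} {c : ℝ}
    (hV : ∀ t, 0 ≤ t → HasDerivWithinAt V (V' t) (Set.Ici 0) t)
    (hV' : ∀ t, 0 ≤ t → V' t ≤ -c * V t) {t : ℝ} (ht : 0 ≤ t) :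
    V t ≤ V 0 * Real.exp (-c * t) := by
  have hcont : ContinuousOn V (Set.Icc 0 t) := fun s hs =>
    (hV s hs.1).continuousWithinAt.mono Set.Icc_subset_Ici_self
  have hslope : ∀ s ∈ Set.Ico 0 t, ∀ r, V' s < r →
      ∃ᶠ u in nhdsWithin s (Set.Ioi s), (u - s)⁻¹ * (V u - V s) < r := fun s hs r hr =>
    ((hV s hs.1).mono (Set.Ici_subset_Ici.2 hs.1)).liminf_right_slope_le hr
  have hgronwall := le_gronwallBound_of_liminf_deriv_right_le (K := -c) (ε := 0) hcont hslope
    le_rfl (fun s hs => by simpa only [add_zero] using hV' s hs.1) t ⟨ht, le_rfl⟩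
  rwa [gronwallBound_ε0, sub_zero] at hgronwall

lemma sqrt_le_mul_exp_mul_sqrt {N₀ N₁ S₀ S₁ a b c r t : ℝ} (ha : 0 ≤ a) (hb : 0 ≤ b) (hc : 0 ≤ c)
    (h₁ : N₁ ≤ a * S₁) (hdecay : S₁ ≤ b * Real.exp (-r * t) * S₀) (h₀ : S₀ ≤ c * N₀) :
    √N₁ ≤ √(a * b * c) * Real.exp (-(r / 2) * t) * √N₀ := by
  have hexp : Real.exp (-r * t) = Real.exp (-(r / 2) * t) ^ 2 := by
    rw [← Real.exp_nat_mul]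
    ring_nf
  have hN : N₁ ≤ a * b * c * Real.exp (-(r / 2) * t) ^ 2 * N₀ := calc
    N₁ ≤ a * (b * Real.exp (-r * t) * (c * N₀)) :=
      h₁.trans (by gcongr; exact hdecay.trans (by gcongr))
    _ = a * b * c * Real.exp (-(r / 2) * t) ^ 2 * N₀ := by rw [hexp]; ring
  calc √N₁ ≤ √(a * b * c * Real.exp (-(r / 2) * t) ^ 2 * N₀) := Real.sqrt_le_sqrt hN
    _ = √(a * b * c) * Real.exp (-(r / 2) * t) * √N₀ := by
      rw [Real.sqrt_mul (by positivity), Real.sqrt_mul (by positivity),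
        Real.sqrt_sq (Real.exp_pos _).le]

/-- The Lyapunov function of the error dynamics. The weights make the derivative along
`IsDissipativeError` a quadratic form with numerical coefficients. -/
noncomputable def errorEnergy (μ σ ρ : ℝ) (w y : F₁) (e : F₂) : ℝ :=
  2 / μ * ‖w‖ ^ 2 + 1 / (6 * ρ) * ‖e‖ ^ 2 + 1 / σ * ‖w - y‖ ^ 2

variable {μ σ ρ : ℝ}

lemma norm_sub_sq_le_two_mul (u v : F₁) : ‖u - v‖ ^ 2 ≤ 2 * (‖u‖ ^ 2 + ‖v‖ ^ 2) := by
  linarith [parallelogram_law_with_norm ℝ u v, sq_nonneg ‖u + v‖]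

lemma errorEnergy_le (hμ : 0 < μ) (hσ : 0 < σ) (hρ : 0 < ρ) (w y : F₁) (e : F₂) :
    errorEnergy μ σ ρ w y e ≤
      (2 / μ + 1 / (6 * ρ) + 2 / σ) * (‖w‖ ^ 2 + ‖y‖ ^ 2 + ‖e‖ ^ 2) := calc
  errorEnergy μ σ ρ w y e
      ≤ 2 / μ * ‖w‖ ^ 2 + 1 / (6 * ρ) * ‖e‖ ^ 2 + 1 / σ * (2 * (‖w‖ ^ 2 + ‖y‖ ^ 2)) := by
    unfold errorEnergy
    gcongr
    exact norm_sub_sq_le_two_mul w y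
  _ = 2 / μ * ‖w‖ ^ 2 + 1 / (6 * ρ) * ‖e‖ ^ 2 + 2 / σ * (‖w‖ ^ 2 + ‖y‖ ^ 2) := by ring
  _ ≤ 2 / μ * (‖w‖ ^ 2 + ‖y‖ ^ 2 + ‖e‖ ^ 2) + 1 / (6 * ρ) * (‖w‖ ^ 2 + ‖y‖ ^ 2 + ‖e‖ ^ 2)
      + 2 / σ * (‖w‖ ^ 2 + ‖y‖ ^ 2 + ‖e‖ ^ 2) := by
    have hw := sq_nonneg ‖w‖
    have hy := sq_nonneg ‖y‖
    have he := sq_nonneg ‖e‖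
    refine add_le_add (add_le_add ?_ ?_) ?_ <;>
      exact mul_le_mul_of_nonneg_left (by linarith) (by positivity)
  _ = (2 / μ + 1 / (6 * ρ) + 2 / σ) * (‖w‖ ^ 2 + ‖y‖ ^ 2 + ‖e‖ ^ 2) := by ring

lemma le_errorEnergy (hμ : 0 < μ) (hσ : 0 < σ) (hρ : 0 < ρ) (w y : F₁) (e : F₂) :
    ‖w‖ ^ 2 + ‖y‖ ^ 2 + ‖e‖ ^ 2 ≤
      (3 * μ / 2 + 6 * ρ + 2 * σ) * errorEnergy μ σ ρ w y e := by
  set P := 2 / μ * ‖w‖ ^ 2 with hP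
  set Q := 1 / (6 * ρ) * ‖e‖ ^ 2 with hQ
  set R := 1 / σ * ‖w - y‖ ^ 2 with hR
  have hw : ‖w‖ ^ 2 = μ / 2 * P := by rw [hP]; field_simp
  have he : ‖e‖ ^ 2 = 6 * ρ * Q := by rw [hQ]; field_simp
  have hwy : ‖w - y‖ ^ 2 = σ * R := by rw [hR]; field_simp
  have hy : ‖y‖ ^ 2 ≤ 2 * (‖w‖ ^ 2 + ‖w - y‖ ^ 2) := by
    simpa only [sub_sub_cancel] using norm_sub_sq_le_two_mul w (w - y)
  calc ‖w‖ ^ 2 + ‖y‖ ^ 2 + ‖e‖ ^ 2 ≤ 3 * μ / 2 * P + 6 * ρ * Q + 2 * σ * R := by linarith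
    _ ≤ 3 * μ / 2 * (P + Q + R) + 6 * ρ * (P + Q + R) + 2 * σ * (P + Q + R) := by
      have : 0 ≤ P := by positivity
      have : 0 ≤ Q := by positivity
      have : 0 ≤ R := by positivity
      gcongr <;> linarith
    _ = (3 * μ / 2 + 6 * ρ + 2 * σ) * (P + Q + R) := by ring

variable [InnerProductSpace ℝ F₂]

/-- The normal form of the error dynamics `ẏ = v`, `ẇ = v + σ y`, `ė = g`, with the sector bounds
that drive it to zero. In the application `w = λ - λ*`, `y = k_p h(x)` and `e` is a multiple of
`q(x) - η*`. The curves live on `[0, ∞)`, hence the derivatives within `Set.Ici 0`. -/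
structure IsDissipativeError (μ σ ρ : ℝ) (w y v : ℝ → F₁) (e g : ℝ → F₂) : Prop where
  hasDeriv_y : ∀ t, 0 ≤ t → HasDerivWithinAt y (v t) (Set.Ici 0) t
  hasDeriv_w : ∀ t, 0 ≤ t → HasDerivWithinAt w (v t + σ • y t) (Set.Ici 0) t
  hasDeriv_e : ∀ t, 0 ≤ t → HasDerivWithinAt e (g t) (Set.Ici 0) t
  inner_w_le : ∀ t, 0 ≤ t → ⟪w t, v t⟫ ≤ μ * (‖w t‖ * (‖y t‖ + ‖e t‖) / 12 - ‖w t‖ ^ 2)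
  inner_e_le : ∀ t, 0 ≤ t → ⟪e t, g t⟫ ≤ ρ * (‖y t‖ * ‖e t‖ - ‖e t‖ ^ 2)

lemma dissipation_quadratic_form_le (W Y E : ℝ) :
    2 * (W * (Y + E) / 12 - W ^ 2) + W * Y + (Y * E - E ^ 2) / 6 + (W * Y - Y ^ 2)
      ≤ -((W ^ 2 + Y ^ 2 + E ^ 2) / 24) := by
  linarith [sq_nonneg (E - 2 / 3 * (W + Y)), sq_nonneg (Y - 4 / 3 * W), sq_nonneg W, sq_nonneg Y]

lemma dissipation_le (hμ : 0 < μ) (hσ : 0 < σ) (hρ : 0 < ρ) (hσμ : 2 * σ ≤ μ)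
    {w y v : F₁} {e g : F₂}
    (hw : ⟪w, v⟫ ≤ μ * (‖w‖ * (‖y‖ + ‖e‖) / 12 - ‖w‖ ^ 2))
    (he : ⟪e, g⟫ ≤ ρ * (‖y‖ * ‖e‖ - ‖e‖ ^ 2)) :
    2 / μ * ⟪w, v + σ • y⟫ + 1 / (6 * ρ) * ⟪e, g⟫ + 1 / σ * ⟪w - y, σ • y⟫
      ≤ -((‖w‖ ^ 2 + ‖y‖ ^ 2 + ‖e‖ ^ 2) / 24) := by
  have hwy : ⟪w, y⟫ ≤ ‖w‖ * ‖y‖ := real_inner_le_norm w y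
  calc 2 / μ * ⟪w, v + σ • y⟫ + 1 / (6 * ρ) * ⟪e, g⟫ + 1 / σ * ⟪w - y, σ • y⟫
      = 2 / μ * ⟪w, v⟫ + 2 * σ / μ * ⟪w, y⟫ + 1 / (6 * ρ) * ⟪e, g⟫ + (⟪w, y⟫ - ‖y‖ ^ 2) := by
        rw [inner_add_right, real_inner_smul_right, real_inner_smul_right, inner_sub_left,
          real_inner_self_eq_norm_sq]
        field_simp
    _ ≤ 2 / μ * (μ * (‖w‖ * (‖y‖ + ‖e‖) / 12 - ‖w‖ ^ 2)) + 2 * σ / μ * (‖w‖ * ‖y‖)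
        + 1 / (6 * ρ) * (ρ * (‖y‖ * ‖e‖ - ‖e‖ ^ 2)) + (‖w‖ * ‖y‖ - ‖y‖ ^ 2) := by gcongr
    _ = 2 * (‖w‖ * (‖y‖ + ‖e‖) / 12 - ‖w‖ ^ 2) + 2 * σ / μ * (‖w‖ * ‖y‖)
        + (‖y‖ * ‖e‖ - ‖e‖ ^ 2) / 6 + (‖w‖ * ‖y‖ - ‖y‖ ^ 2) := by
      field_simp
    _ ≤ 2 * (‖w‖ * (‖y‖ + ‖e‖) / 12 - ‖w‖ ^ 2) + 1 * (‖w‖ * ‖y‖)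
        + (‖y‖ * ‖e‖ - ‖e‖ ^ 2) / 6 + (‖w‖ * ‖y‖ - ‖y‖ ^ 2) := by
      gcongr
      exact (div_le_one hμ).2 hσμ
    _ ≤ -((‖w‖ ^ 2 + ‖y‖ ^ 2 + ‖e‖ ^ 2) / 24) := by
      rw [one_mul]
      exact dissipation_quadratic_form_le ‖w‖ ‖y‖ ‖e‖

namespace IsDissipativeError

variable {w y v : ℝ → F₁} {e g : ℝ → F₂}

lemma hasDerivWithinAt_errorEnergy (H : IsDissipativeError μ σ ρ w y v e g) {t : ℝ} (ht : 0 ≤ t) :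
    HasDerivWithinAt (fun s => errorEnergy μ σ ρ (w s) (y s) (e s))
      (2 * (2 / μ * ⟪w t, v t + σ • y t⟫ + 1 / (6 * ρ) * ⟪e t, g t⟫
        + 1 / σ * ⟪w t - y t, σ • y t⟫)) (Set.Ici 0) t := by
  have hwy : HasDerivWithinAt (fun s => w s - y s) (σ • y t) (Set.Ici 0) t :=
    ((H.hasDeriv_w t ht).sub (H.hasDeriv_y t ht)).congr_deriv (add_sub_cancel_left _ _)
  exact ((((H.hasDeriv_w t ht).norm_sq.const_mul (2 / μ)).add
    ((H.hasDeriv_e t ht).norm_sq.const_mul (1 / (6 * ρ)))).add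
    (hwy.norm_sq.const_mul (1 / σ))).congr_deriv (by ring)

lemma errorEnergy_le_mul_exp (H : IsDissipativeError μ σ ρ w y v e g)
    (hμ : 0 < μ) (hσ : 0 < σ) (hρ : 0 < ρ) (hσμ : 2 * σ ≤ μ) {t : ℝ} (ht : 0 ≤ t) :
    errorEnergy μ σ ρ (w t) (y t) (e t) ≤ errorEnergy μ σ ρ (w 0) (y 0) (e 0)
      * Real.exp (-(1 / (12 * (2 / μ + 1 / (6 * ρ) + 2 / σ))) * t) := by
  refine le_mul_exp_of_hasDerivWithinAt_le (fun s hs => H.hasDerivWithinAt_errorEnergy hs)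
    (fun s hs => ?_) ht
  set K := 2 / μ + 1 / (6 * ρ) + 2 / σ
  have hK : 0 < K := by positivity
  have hdiss := dissipation_le hμ hσ hρ hσμ (H.inner_w_le s hs) (H.inner_e_le s hs)
  have henergy : 1 / (12 * K) * errorEnergy μ σ ρ (w s) (y s) (e s)
      ≤ (‖w s‖ ^ 2 + ‖y s‖ ^ 2 + ‖e s‖ ^ 2) / 12 := calc
    _ ≤ 1 / (12 * K) * (K * (‖w s‖ ^ 2 + ‖y s‖ ^ 2 + ‖e s‖ ^ 2)) := by
      gcongr
      exact errorEnergy_le hμ hσ hρ (w s) (y s) (e s)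
    _ = (‖w s‖ ^ 2 + ‖y s‖ ^ 2 + ‖e s‖ ^ 2) / 12 := by field_simp
  linarith

end IsDissipativeError

variable (F₁ F₂) in
lemma exists_exp_decay_of_isDissipativeError (hμ : 0 < μ) (hσ : 0 < σ) (hρ : 0 < ρ)
    (hσμ : 2 * σ ≤ μ) :
    ∃ C r : ℝ, 0 < C ∧ 0 < r ∧ ∀ {w y v : ℝ → F₁} {e g : ℝ → F₂},
      IsDissipativeError μ σ ρ w y v e g → ∀ t, 0 ≤ t →
        ‖w t‖ ^ 2 + ‖y t‖ ^ 2 + ‖e t‖ ^ 2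
          ≤ C * Real.exp (-r * t) * (‖w 0‖ ^ 2 + ‖y 0‖ ^ 2 + ‖e 0‖ ^ 2) := by
  refine ⟨(3 * μ / 2 + 6 * ρ + 2 * σ) * (2 / μ + 1 / (6 * ρ) + 2 / σ),
    1 / (12 * (2 / μ + 1 / (6 * ρ) + 2 / σ)), by positivity, by positivity, ?_⟩
  intro w y v e g H t ht
  set r := 1 / (12 * (2 / μ + 1 / (6 * ρ) + 2 / σ))
  calc ‖w t‖ ^ 2 + ‖y t‖ ^ 2 + ‖e t‖ ^ 2
      ≤ (3 * μ / 2 + 6 * ρ + 2 * σ) * errorEnergy μ σ ρ (w t) (y t) (e t) :=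
        le_errorEnergy hμ hσ hρ _ _ _
    _ ≤ (3 * μ / 2 + 6 * ρ + 2 * σ)
        * (errorEnergy μ σ ρ (w 0) (y 0) (e 0) * Real.exp (-r * t)) := by
      gcongr
      exact H.errorEnergy_le_mul_exp hμ hσ hρ hσμ ht
    _ ≤ (3 * μ / 2 + 6 * ρ + 2 * σ) * ((2 / μ + 1 / (6 * ρ) + 2 / σ)
        * (‖w 0‖ ^ 2 + ‖y 0‖ ^ 2 + ‖e 0‖ ^ 2) * Real.exp (-r * t)) := by
      gcongr
      exact errorEnergy_le hμ hσ hρ _ _ _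
    _ = _ := by ring

end Dissipation

section Elementary

lemma sqrt_sq_add_sq_le_add {a b : ℝ} (ha : 0 ≤ a) (hb : 0 ≤ b) : √(a ^ 2 + b ^ 2) ≤ a + b := by
  rw [Real.sqrt_le_left (by positivity)]
  linarith [mul_nonneg ha hb, add_sq a b]

lemma sq_add_sq_le_of_le_mul_sqrt {L d w a b s r : ℝ} (hs : s ≠ 0) (hr : r ≠ 0) (hd : 0 ≤ d)
    (h : d ≤ L * √(a ^ 2 + b ^ 2)) :
    d ^ 2 + w ^ 2 ≤
      (1 + L ^ 2 * (1 / s ^ 2 + 1 / r ^ 2)) * (w ^ 2 + (s * a) ^ 2 + (r * b) ^ 2) := by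
  have hd2 : d ^ 2 ≤ L ^ 2 * (a ^ 2 + b ^ 2) := by
    simpa only [mul_pow, Real.sq_sqrt (add_nonneg (sq_nonneg a) (sq_nonneg b))]
      using pow_le_pow_left₀ hd h 2
  have hab : a ^ 2 + b ^ 2 ≤ (1 / s ^ 2 + 1 / r ^ 2) * (w ^ 2 + (s * a) ^ 2 + (r * b) ^ 2) := calc
    a ^ 2 + b ^ 2 = 1 / s ^ 2 * (s * a) ^ 2 + 1 / r ^ 2 * (r * b) ^ 2 := by field_simp
    _ ≤ 1 / s ^ 2 * (w ^ 2 + (s * a) ^ 2 + (r * b) ^ 2)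
        + 1 / r ^ 2 * (w ^ 2 + (s * a) ^ 2 + (r * b) ^ 2) := by
      gcongr <;> linarith [sq_nonneg w, sq_nonneg (s * a), sq_nonneg (r * b)]
    _ = _ := by ring
  linarith [mul_le_mul_of_nonneg_left hab (sq_nonneg L), sq_nonneg (s * a), sq_nonneg (r * b)]

lemma add_sq_add_sq_le_of_sqrt_le_mul {L d w a b : ℝ} (s r : ℝ) (h : √(a ^ 2 + b ^ 2) ≤ L * d) :
    w ^ 2 + (s * a) ^ 2 + (r * b) ^ 2 ≤
      (1 + L ^ 2 * (s ^ 2 + r ^ 2)) * (d ^ 2 + w ^ 2) := by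
  have hab : a ^ 2 + b ^ 2 ≤ L ^ 2 * d ^ 2 := by
    simpa only [mul_pow, Real.sq_sqrt (add_nonneg (sq_nonneg a) (sq_nonneg b))]
      using pow_le_pow_left₀ (Real.sqrt_nonneg _) h 2
  calc w ^ 2 + (s * a) ^ 2 + (r * b) ^ 2
      ≤ w ^ 2 + (s ^ 2 + r ^ 2) * (a ^ 2 + b ^ 2) := by
        linarith [sq_nonneg (s * b), sq_nonneg (r * a)]
    _ ≤ w ^ 2 + (s ^ 2 + r ^ 2) * (L ^ 2 * d ^ 2) := by gcongr
    _ ≤ (1 + L ^ 2 * (s ^ 2 + r ^ 2)) * (d ^ 2 + w ^ 2) := by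
      have hw : 0 ≤ L ^ 2 * (s ^ 2 + r ^ 2) * w ^ 2 := by positivity
      linarith [sq_nonneg d]

lemma gain_bounds_of_threshold {m ρ L₁ L kp : ℝ} (hm : 0 < m) (hρ : 0 < ρ) (hL₁ : 0 < L₁)
    (hkp : 0 ≤ kp)
    (hκ : 12 * L / m + 64 * L ^ 2 / m ^ 2 + 8 * L₁ ^ 2 * L / (ρ ^ 2 * m)
      + 128 * L₁ ^ 2 * L ^ 2 / (ρ ^ 2 * m ^ 2) ≤ kp) :
    12 * L ≤ m * kp ∧ 12 * L * L₁ ≤ m * kp * ρ := by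
  obtain ⟨a, rfl⟩ : ∃ a, L = a * m := ⟨L / m, by field_simp⟩
  obtain ⟨b, rfl⟩ : ∃ b, L₁ = b * ρ := ⟨L₁ / ρ, by field_simp⟩
  have hb : 0 < b := pos_of_mul_pos_left hL₁ hρ.le
  have hκ' : 12 * a + 64 * a ^ 2 + 8 * b ^ 2 * a + 128 * b ^ 2 * a ^ 2 ≤ kp := by
    field_simp at hκ ⊢
    linarith
  obtain ⟨ha12, hab12⟩ : 12 * a ≤ kp ∧ 12 * (a * b) ≤ kp := by
    rcases le_total a 0 with ha | ha
    · have hab : a * b ≤ 0 := mul_nonpos_of_nonpos_of_nonneg ha hb.le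
      exact ⟨by linarith, by linarith⟩
    · have hsq : 0 ≤ a * (b - 1) ^ 2 := by positivity
      have hb2 : 0 ≤ b ^ 2 * a := by positivity
      have hab2 : 0 ≤ b ^ 2 * a ^ 2 := by positivity
      exact ⟨by linarith [sq_nonneg a], by linarith [sq_nonneg a]⟩
  constructor
  · calc 12 * (a * m) = m * (12 * a) := by ring
      _ ≤ m * kp := by gcongr
  · calc 12 * (a * m) * (b * ρ) = m * (12 * (a * b)) * ρ := by ring
      _ ≤ m * kp * ρ := by gcongr

end Elementary

section Chart

variable {E F₁ F₂ : Type*} [NormedAddCommGroup E] [NormedAddCommGroup F₁] [NormedAddCommGroup F₂]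
  {h : E → F₁} {q : E → F₂} {Ψ : F₁ × F₂ → E}

lemma norm_sub_chart_le {LΨ : ℝ} (hleft : ∀ x, Ψ (h x, q x) = x)
    (hΨLip : ∀ p p' : F₁ × F₂,
      ‖Ψ p - Ψ p'‖ ≤ LΨ * √(‖p.1 - p'.1‖ ^ 2 + ‖p.2 - p'.2‖ ^ 2)) (η : F₂) (x : E) :
    ‖x - Ψ (0, η)‖ ≤ LΨ * √(‖h x‖ ^ 2 + ‖q x - η‖ ^ 2) := by
  simpa only [hleft, sub_zero] using hΨLip (h x, q x) (0, η)

lemma nonneg_of_norm_sub_le_mul {G : Type*} [SeminormedAddCommGroup G] [Nontrivial E] {φ : E → G}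
    {L : ℝ} (hφ : ∀ x x', ‖φ x - φ x'‖ ≤ L * ‖x - x'‖) : 0 ≤ L := by
  obtain ⟨x, x', hne⟩ := exists_pair_ne E
  exact nonneg_of_mul_nonneg_left ((norm_nonneg _).trans (hφ x x'))
    (norm_pos_iff.2 (sub_ne_zero.2 hne))

lemma pos_of_chart_lipschitz [Nontrivial E] {LΨ : ℝ}
    (hleft : ∀ x, Ψ (h x, q x) = x) (hΨLip : ∀ p p' : F₁ × F₂,
      ‖Ψ p - Ψ p'‖ ≤ LΨ * √(‖p.1 - p'.1‖ ^ 2 + ‖p.2 - p'.2‖ ^ 2)) : 0 < LΨ := by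
  obtain ⟨x, x', hne⟩ := exists_pair_ne E
  have hlip := hΨLip (h x, q x) (h x', q x')
  rw [hleft, hleft] at hlip
  exact pos_of_mul_pos_left ((norm_pos_iff.2 (sub_ne_zero.2 hne)).trans_le hlip)
    (Real.sqrt_nonneg _)

lemma norm_apply_sub_apply_chart_le {G : Type*} [SeminormedAddCommGroup G] [Nontrivial E]
    {φ : E → G} {L LΨ : ℝ} (hleft : ∀ x, Ψ (h x, q x) = x)
    (hΨLip : ∀ p p' : F₁ × F₂,
      ‖Ψ p - Ψ p'‖ ≤ LΨ * √(‖p.1 - p'.1‖ ^ 2 + ‖p.2 - p'.2‖ ^ 2))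
    (hφLip : ∀ x x', ‖φ x - φ x'‖ ≤ L * ‖x - x'‖) (η : F₂) (x : E) :
    ‖φ x - φ (Ψ (0, η))‖ ≤ L * LΨ * (‖h x‖ + ‖q x - η‖) := by
  have hL : 0 ≤ L := nonneg_of_norm_sub_le_mul hφLip
  have hLΨ : 0 < LΨ := pos_of_chart_lipschitz hleft hΨLip
  calc ‖φ x - φ (Ψ (0, η))‖ ≤ L * ‖x - Ψ (0, η)‖ := hφLip _ _
    _ ≤ L * (LΨ * √(‖h x‖ ^ 2 + ‖q x - η‖ ^ 2)) := by
      gcongr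
      exact norm_sub_chart_le hleft hΨLip η x
    _ ≤ L * (LΨ * (‖h x‖ + ‖q x - η‖)) := by
      gcongr
      exact sqrt_sq_add_sq_le_add (norm_nonneg _) (norm_nonneg _)
    _ = L * LΨ * (‖h x‖ + ‖q x - η‖) := by ring

end Chart

section ConstrainedFlow

open scoped Gradient InnerProduct

variable {E F₁ F₂ : Type*} [NormedAddCommGroup E] [InnerProductSpace ℝ E]
  [NormedAddCommGroup F₁] [InnerProductSpace ℝ F₁]
  [NormedAddCommGroup F₂] [InnerProductSpace ℝ F₂]

lemma mul_norm_sub_sq_le_inner_sub {g : F₂ → ℝ} {g' : F₂ → F₂} {ρ : ℝ}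
    (hg : ∀ u v, g v ≥ g u + ⟪g' u, v - u⟫ + ρ / 2 * ‖v - u‖ ^ 2) (u v : F₂) :
    ρ * ‖u - v‖ ^ 2 ≤ ⟪u - v, g' u - g' v⟫ := by
  have huv := hg u v
  have hvu := hg v u
  rw [norm_sub_rev, ← neg_sub u v, inner_neg_right] at huv
  rw [inner_sub_right, real_inner_comm, real_inner_comm (g' v)]
  linarith

lemma inner_smul_le_of_gain {kp m ρ L L₁ : ℝ} {w v y : F₁} {e : F₂} (hkp : 0 < kp) (hρ : 0 < ρ)
    (hL₁ : 0 < L₁) (hgain : 12 * L ≤ m * kp) (hgain' : 12 * L * L₁ ≤ m * kp * ρ)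
    (hv : ⟪w, v⟫ ≤ ‖w‖ * (L * (‖y‖ + ‖e‖)) - m * ‖w‖ ^ 2) :
    ⟪w, kp • v⟫ ≤ m * kp * (‖w‖ * (‖kp • y‖ + ‖(kp * ρ / L₁) • e‖) / 12 - ‖w‖ ^ 2) := by
  have hL : L ≤ m * kp / 12 := by linarith
  have hL' : L ≤ m * kp * ρ / L₁ / 12 := by
    rw [le_div_iff₀ (by norm_num), le_div_iff₀ hL₁]
    linarith
  rw [real_inner_smul_right, norm_smul, norm_smul, Real.norm_of_nonneg hkp.le,
    Real.norm_of_nonneg (by positivity)]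
  calc kp * ⟪w, v⟫ ≤ kp * (‖w‖ * (L * (‖y‖ + ‖e‖)) - m * ‖w‖ ^ 2) := by gcongr
    _ = kp * (‖w‖ * (L * ‖y‖ + L * ‖e‖) - m * ‖w‖ ^ 2) := by ring
    _ ≤ kp * (‖w‖ * (m * kp / 12 * ‖y‖ + m * kp * ρ / L₁ / 12 * ‖e‖) - m * ‖w‖ ^ 2) := by gcongr
    _ = m * kp * (‖w‖ * (kp * ‖y‖ + kp * ρ / L₁ * ‖e‖) / 12 - ‖w‖ ^ 2) := by ring

lemma inner_smul_smul_le {kp ρ L₁ : ℝ} {y : F₁} {e g : F₂} (hkp : 0 < kp) (hρ : 0 < ρ)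
    (hL₁ : 0 < L₁) (hg : ⟪e, g⟫ ≤ L₁ * ‖y‖ * ‖e‖ - ρ * ‖e‖ ^ 2) :
    ⟪(kp * ρ / L₁) • e, (kp * ρ / L₁) • g⟫
      ≤ ρ * (‖kp • y‖ * ‖(kp * ρ / L₁) • e‖ - ‖(kp * ρ / L₁) • e‖ ^ 2) := by
  rw [real_inner_smul_left, real_inner_smul_right, norm_smul, norm_smul,
    Real.norm_of_nonneg hkp.le, Real.norm_of_nonneg (by positivity)]
  calc kp * ρ / L₁ * (kp * ρ / L₁ * ⟪e, g⟫)
      ≤ kp * ρ / L₁ * (kp * ρ / L₁ * (L₁ * ‖y‖ * ‖e‖ - ρ * ‖e‖ ^ 2)) := by gcongr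
    _ = ρ * (kp * ‖y‖ * (kp * ρ / L₁ * ‖e‖) - (kp * ρ / L₁ * ‖e‖) ^ 2) := by field_simp

lemma fderiv_comp_fderiv_prod_eq_id {h : E → F₁} {q : E → F₂} {Ψ : F₁ × F₂ → E} {x : E}
    (hh : DifferentiableAt ℝ h x) (hq : DifferentiableAt ℝ q x)
    (hΨ : DifferentiableAt ℝ Ψ (h x, q x)) (hleft : ∀ x, Ψ (h x, q x) = x) :
    fderiv ℝ Ψ (h x, q x) ∘L (fderiv ℝ h x).prod (fderiv ℝ q x) = ContinuousLinearMap.id ℝ E := by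
  have hcomp : HasFDerivAt (fun z => Ψ (h z, q z))
      (fderiv ℝ Ψ (h x, q x) ∘L (fderiv ℝ h x).prod (fderiv ℝ q x)) x :=
    hΨ.hasFDerivAt.comp x (hh.hasFDerivAt.prodMk hq.hasFDerivAt)
  exact hcomp.unique ((hasFDerivAt_id x).congr_of_eventuallyEq (.of_forall hleft))

variable [CompleteSpace E] [CompleteSpace F₁]

lemma apply_zero_prod_eq_adjoint [CompleteSpace F₂] {H : E →L[ℝ] F₁} {Q : E →L[ℝ] F₂}
    {T : F₁ × F₂ →L[ℝ] E} (hT : T ∘L H.prod Q = ContinuousLinearMap.id ℝ E)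
    (hQQ : Q ∘L Q† = ContinuousLinearMap.id ℝ F₂) (hQH : Q ∘L H† = 0) (v : F₂) :
    T (0, v) = (Q†) v := by
  have hHQ : H ∘L Q† = 0 := by
    simpa only [ContinuousLinearMap.adjoint_comp, ContinuousLinearMap.adjoint_adjoint, map_zero]
      using congrArg ContinuousLinearMap.adjoint hQH
  calc T (0, v) = T (H ((Q†) v), Q ((Q†) v)) := by
        rw [show H ((Q†) v) = 0 from DFunLike.congr_fun hHQ v,
          show Q ((Q†) v) = v from DFunLike.congr_fun hQQ v]
    _ = (Q†) v := DFunLike.congr_fun hT ((Q†) v)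

lemma hasGradientAt_comp_chart [CompleteSpace F₂] {f : E → ℝ} {h : E → F₁} {q : E → F₂}
    {Ψ : F₁ × F₂ → E} (hf : Differentiable ℝ f) (hh : Differentiable ℝ h)
    (hq : Differentiable ℝ q) (hΨ : Differentiable ℝ Ψ) (hleft : ∀ x, Ψ (h x, q x) = x)
    (hright : ∀ p, (h (Ψ p), q (Ψ p)) = p)
    (horth₁ : ∀ x, fderiv ℝ q x ∘L (fderiv ℝ q x)† = ContinuousLinearMap.id ℝ F₂)
    (horth₂ : ∀ x, fderiv ℝ q x ∘L (fderiv ℝ h x)† = 0) (y : F₁) (η : F₂) :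
    HasGradientAt (fun η => f (Ψ (y, η))) (fderiv ℝ q (Ψ (y, η)) (∇ f (Ψ (y, η)))) η := by
  set x := Ψ (y, η)
  have hslice : HasFDerivAt (fun η => Ψ (y, η)) ((fderiv ℝ q x)†) η := by
    have hid := fderiv_comp_fderiv_prod_eq_id (hh x) (hq x) (hΨ _) hleft
    rw [hright] at hid
    refine ((hΨ (y, η)).hasFDerivAt.comp η (hasFDerivAt_prodMk_right y η)).congr_fderiv ?_
    ext v
    exact apply_zero_prod_eq_adjoint hid (horth₁ x) (horth₂ x) v
  rw [hasGradientAt_iff_hasFDerivAt]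
  refine ((hf x).hasGradientAt.hasFDerivAt.comp η hslice).congr_fderiv ?_
  ext v
  exact ContinuousLinearMap.adjoint_inner_right (fderiv ℝ q x) (∇ f x) v

/-- The Gram map `Dh(x) Dh(x)†` of the constraint `h`. -/
noncomputable def constraintGram (h : E → F₁) (x : E) : F₁ →L[ℝ] F₁ :=
  fderiv ℝ h x ∘L (fderiv ℝ h x)†

/-- The least-squares multiplier `φ(x) = -(Dh(x) Dh(x)†)⁻¹ (Dh(x) ∇f(x))`; it is the multiplier
making the velocity `-∇f(x) - Dh(x)†φ(x)` tangent to the level set of `h`. `Ring.inverse` is `0`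
where the Gram map is not invertible. -/
noncomputable def leastSquaresMultiplier (f : E → ℝ) (h : E → F₁) (x : E) : F₁ :=
  -(Ring.inverse (constraintGram h x) (fderiv ℝ h x (∇ f x)))

/-- The velocity `-∇f(x) - Dh(x)†λ` of gradient descent on the Lagrangian `f + ⟪λ, h⟫`. -/
noncomputable def lagrangianDescent (f : E → ℝ) (h : E → F₁) (x : E) (lam : F₁) : E :=
  -∇ f x - ((fderiv ℝ h x)†) lam

variable {f : E → ℝ} {h : E → F₁} {q : E → F₂} {x : E}

lemma isUnit_constraintGram {m : ℝ} (hm : 0 < m)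
    (hcoerc : ∀ v, ⟪((fderiv ℝ h x)†) v, ((fderiv ℝ h x)†) v⟫ ≥ m * ‖v‖ ^ 2) :
    IsUnit (constraintGram h x) := by
  refine ContinuousLinearMap.isUnit_of_forall_le_norm_inner_map _ (c := ⟨m, hm.le⟩) hm fun v => ?_
  calc ‖v‖ ^ 2 * m ≤ ⟪((fderiv ℝ h x)†) v, ((fderiv ℝ h x)†) v⟫ := by
        rw [mul_comm]
        exact hcoerc v
    _ = ⟪constraintGram h x v, v⟫ := ContinuousLinearMap.adjoint_inner_right _ _ _
    _ ≤ ‖⟪constraintGram h x v, v⟫‖ := le_abs_self _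

lemma fderiv_constraint_lagrangianDescent (hunit : IsUnit (constraintGram h x)) (lam : F₁) :
    fderiv ℝ h x (lagrangianDescent f h x lam)
      = constraintGram h x (leastSquaresMultiplier f h x - lam) := by
  have hφ : constraintGram h x (leastSquaresMultiplier f h x) = -fderiv ℝ h x (∇ f x) := by
    rw [leastSquaresMultiplier, map_neg]
    exact congrArg Neg.neg (DFunLike.congr_fun (Ring.mul_inverse_cancel _ hunit) _)
  rw [map_sub, hφ, lagrangianDescent, map_sub, map_neg]
  rfl

lemma inner_fderiv_constraint_lagrangianDescent_le {m M δ : ℝ} {lam' : F₁} (hm : 0 < m)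
    (hcoerc : ∀ v, ⟪((fderiv ℝ h x)†) v, ((fderiv ℝ h x)†) v⟫ ≥ m * ‖v‖ ^ 2)
    (hM : ‖constraintGram h x‖ ≤ M) (hδ : ‖leastSquaresMultiplier f h x - lam'‖ ≤ δ) (lam : F₁) :
    ⟪lam - lam', fderiv ℝ h x (lagrangianDescent f h x lam)⟫
      ≤ ‖lam - lam'‖ * (M * δ) - m * ‖lam - lam'‖ ^ 2 := by
  set φ := leastSquaresMultiplier f h x
  have hsplit : fderiv ℝ h x (lagrangianDescent f h x lam)
      = constraintGram h x (φ - lam') - constraintGram h x (lam - lam') := by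
    rw [fderiv_constraint_lagrangianDescent (isUnit_constraintGram hm hcoerc), ← map_sub,
      sub_sub_sub_cancel_right]
  have hgram : m * ‖lam - lam'‖ ^ 2 ≤ ⟪lam - lam', constraintGram h x (lam - lam')⟫ :=
    (hcoerc _).trans_eq (ContinuousLinearMap.adjoint_inner_left _ _ _)
  have hφ : ⟪lam - lam', constraintGram h x (φ - lam')⟫ ≤ ‖lam - lam'‖ * (M * δ) :=
    (real_inner_le_norm _ _).trans <| by
      gcongr
      exact (constraintGram h x).le_of_opNorm_le_of_le hM hδ
  rw [hsplit, inner_sub_right]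
  linarith

lemma fderiv_tangent_lagrangianDescent (horth : fderiv ℝ q x ∘L (fderiv ℝ h x)† = 0) (lam : F₁) :
    fderiv ℝ q x (lagrangianDescent f h x lam) = -fderiv ℝ q x (∇ f x) := by
  have hforce : fderiv ℝ q x (((fderiv ℝ h x)†) lam) = 0 := DFunLike.congr_fun horth lam
  rw [lagrangianDescent, map_sub, hforce, sub_zero, map_neg]

lemma inner_fderiv_tangent_lagrangianDescent_le {e g : F₂} {ρ δ : ℝ}
    (horth : fderiv ℝ q x ∘L (fderiv ℝ h x)† = 0) (hg : ρ * ‖e‖ ^ 2 ≤ ⟪e, g⟫)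
    (hδ : ‖fderiv ℝ q x (∇ f x) - g‖ ≤ δ) (lam : F₁) :
    ⟪e, fderiv ℝ q x (lagrangianDescent f h x lam)⟫ ≤ δ * ‖e‖ - ρ * ‖e‖ ^ 2 := by
  have herr : ⟪e, g - fderiv ℝ q x (∇ f x)⟫ ≤ ‖e‖ * δ :=
    (real_inner_le_norm _ _).trans (by rw [norm_sub_rev]; gcongr)
  rw [fderiv_tangent_lagrangianDescent horth, inner_neg_right]
  rw [inner_sub_right] at herr
  linarith

/-- A trajectory on `[0, ∞)` of the PI dynamics `ẋ = -∇f(x) - Dh(x)†(k_p h(x) + k_i z)`,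
`ż = h(x)`. -/
structure IsPITrajectory (f : E → ℝ) (h : E → F₁) (kp ki : ℝ) (x : ℝ → E) (z : ℝ → F₁) :
    Prop where
  hasDeriv_primal : ∀ t, 0 ≤ t → HasDerivWithinAt x
    (lagrangianDescent f h (x t) (kp • h (x t) + ki • z t)) (Set.Ici 0) t
  hasDeriv_integrator : ∀ t, 0 ≤ t → HasDerivWithinAt z (h (x t)) (Set.Ici 0) t

lemma IsPITrajectory.isDissipativeError {kp ki m ρ L L₁ : ℝ} {ηstar : F₂} {lamstar : F₁}
    {x : ℝ → E} {z : ℝ → F₁} (H : IsPITrajectory f h kp ki x z)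
    (hh : Differentiable ℝ h) (hq : Differentiable ℝ q) (hkp : 0 < kp) (hρ : 0 < ρ)
    (hL₁ : 0 < L₁) (hgain : 12 * L ≤ m * kp) (hgain' : 12 * L * L₁ ≤ m * kp * ρ)
    (hnormal : ∀ x lam, ⟪lam - lamstar, fderiv ℝ h x (lagrangianDescent f h x lam)⟫
      ≤ ‖lam - lamstar‖ * (L * (‖h x‖ + ‖q x - ηstar‖)) - m * ‖lam - lamstar‖ ^ 2)
    (htangent : ∀ x lam, ⟪q x - ηstar, fderiv ℝ q x (lagrangianDescent f h x lam)⟫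
      ≤ L₁ * ‖h x‖ * ‖q x - ηstar‖ - ρ * ‖q x - ηstar‖ ^ 2) :
    IsDissipativeError (m * kp) (ki / kp) ρ (fun t => (kp • h (x t) + ki • z t) - lamstar)
      (fun t => kp • h (x t))
      (fun t => kp • fderiv ℝ h (x t) (lagrangianDescent f h (x t) (kp • h (x t) + ki • z t)))
      (fun t => (kp * ρ / L₁) • (q (x t) - ηstar))
      (fun t => (kp * ρ / L₁) •
        fderiv ℝ q (x t) (lagrangianDescent f h (x t) (kp • h (x t) + ki • z t))) := by
  have hy : ∀ t, 0 ≤ t → HasDerivWithinAt (fun t => kp • h (x t)) (kp • fderiv ℝ h (x t)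
      (lagrangianDescent f h (x t) (kp • h (x t) + ki • z t))) (Set.Ici 0) t := fun t ht =>
    ((hh (x t)).hasFDerivAt.comp_hasDerivWithinAt t (H.hasDeriv_primal t ht)).const_smul kp
  refine ⟨hy, fun t ht => ?_, fun t ht => ?_, fun t _ => ?_, fun t _ => ?_⟩
  · rw [smul_smul, div_mul_cancel₀ _ hkp.ne']
    exact ((hy t ht).add ((H.hasDeriv_integrator t ht).const_smul ki)).sub_const lamstar
  · exact (((hq (x t)).hasFDerivAt.comp_hasDerivWithinAt t
      (H.hasDeriv_primal t ht)).sub_const ηstar).const_smul (kp * ρ / L₁)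
  · exact inner_smul_le_of_gain hkp hρ hL₁ hgain hgain' (hnormal _ _)
  · exact inner_smul_smul_le hkp hρ hL₁ (htangent _ _)

variable [CompleteSpace F₂]

lemma inner_fderiv_tangent_lagrangianDescent_le_of_chart {f : E → ℝ} {h : E → F₁} {q : E → F₂}
    {Ψ : F₁ × F₂ → E} {ρ L₁ : ℝ} {ηstar : F₂} (hf : Differentiable ℝ f) (hh : Differentiable ℝ h)
    (hq : Differentiable ℝ q) (hΨ : Differentiable ℝ Ψ) (hleft : ∀ x, Ψ (h x, q x) = x)
    (hright : ∀ p, (h (Ψ p), q (Ψ p)) = p)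
    (horth₁ : ∀ x, fderiv ℝ q x ∘L (fderiv ℝ q x)† = ContinuousLinearMap.id ℝ F₂)
    (horth₂ : ∀ x, fderiv ℝ q x ∘L (fderiv ℝ h x)† = 0)
    (hconv : ∀ u v, f (Ψ (0, v)) ≥ f (Ψ (0, u)) + ⟪∇ (fun η => f (Ψ (0, η))) u, v - u⟫
      + ρ / 2 * ‖v - u‖ ^ 2)
    (hcrit : ∇ (fun η => f (Ψ (0, η))) ηstar = 0)
    (htrans : ∀ y η, ‖fderiv ℝ q (Ψ (y, η)) (∇ f (Ψ (y, η)))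
      - fderiv ℝ q (Ψ (0, η)) (∇ f (Ψ (0, η)))‖ ≤ L₁ * ‖y‖) (x : E) (lam : F₁) :
    ⟪q x - ηstar, fderiv ℝ q x (lagrangianDescent f h x lam)⟫
      ≤ L₁ * ‖h x‖ * ‖q x - ηstar‖ - ρ * ‖q x - ηstar‖ ^ 2 := by
  have hreduced := mul_norm_sub_sq_le_inner_sub hconv (q x) ηstar
  rw [hcrit, sub_zero,
    (hasGradientAt_comp_chart hf hh hq hΨ hleft hright horth₁ horth₂ 0 (q x)).gradient] at hreduced
  have herror := htrans (h x) (q x)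
  rw [hleft] at herror
  exact inner_fderiv_tangent_lagrangianDescent_le (horth₂ x) hreduced herror lam

theorem pi_dynamics_explicit_gain_threshold_general [Nontrivial E]
    {f : E → ℝ} {h : E → F₁} {q : E → F₂} {Ψ : F₁ × F₂ → E}
    (hf : Differentiable ℝ f) (hh : Differentiable ℝ h) (hq : Differentiable ℝ q)
    (hΨ : Differentiable ℝ Ψ)
    (hleft : ∀ x, Ψ (h x, q x) = x) (hright : ∀ p, (h (Ψ p), q (Ψ p)) = p)
    (horth₁ : ∀ x, fderiv ℝ q x ∘L (fderiv ℝ q x)† = ContinuousLinearMap.id ℝ F₂)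
    (horth₂ : ∀ x, fderiv ℝ q x ∘L (fderiv ℝ h x)† = 0)
    {mlow mup : ℝ} (hmlow : 0 < mlow)
    (hcoerc : ∀ x v, ⟪((fderiv ℝ h x)†) v, ((fderiv ℝ h x)†) v⟫ ≥ mlow * ‖v‖ ^ 2)
    (hmup : ∀ x, ‖constraintGram h x‖ ≤ mup)
    {ρη : ℝ} (hρη : 0 < ρη)
    (hconv : ∀ u v, f (Ψ (0, v)) ≥ f (Ψ (0, u)) + ⟪∇ (fun η => f (Ψ (0, η))) u, v - u⟫
      + ρη / 2 * ‖v - u‖ ^ 2)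
    {ηstar : F₂} (hcrit : ∇ (fun η => f (Ψ (0, η))) ηstar = 0)
    {LΦ LΨ : ℝ}
    (hΦLip : ∀ x x', √(‖h x - h x'‖ ^ 2 + ‖q x - q x'‖ ^ 2) ≤ LΦ * ‖x - x'‖)
    (hΨLip : ∀ p p', ‖Ψ p - Ψ p'‖ ≤ LΨ * √(‖p.1 - p'.1‖ ^ 2 + ‖p.2 - p'.2‖ ^ 2))
    {L₁ : ℝ} (hL₁ : 0 < L₁)
    (htrans : ∀ y η, ‖fderiv ℝ q (Ψ (y, η)) (∇ f (Ψ (y, η)))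
      - fderiv ℝ q (Ψ (0, η)) (∇ f (Ψ (0, η)))‖ ≤ L₁ * ‖y‖)
    {L₂ : ℝ}
    (hφLip : ∀ x₁ x₂, ‖leastSquaresMultiplier f h x₁ - leastSquaresMultiplier f h x₂‖
      ≤ L₂ * ‖x₁ - x₂‖)
    {kp ki : ℝ} (hkp : 0 < kp) (hki : 0 < ki) (hkik : ki ≤ mlow * kp ^ 2 / 2)
    (hgain : 12 * (mup * L₂ * LΨ) ≤ mlow * kp)
    (hgain' : 12 * (mup * L₂ * LΨ) * L₁ ≤ mlow * kp * ρη) :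
    ∃ cπ ρπ : ℝ, 0 < cπ ∧ 0 < ρπ ∧ ∀ x z, IsPITrajectory f h kp ki x z → ∀ t, 0 ≤ t →
      √(‖x t - Ψ (0, ηstar)‖ ^ 2
          + ‖(kp • h (x t) + ki • z t) - leastSquaresMultiplier f h (Ψ (0, ηstar))‖ ^ 2)
        ≤ cπ * Real.exp (-ρπ * t) * √(‖x 0 - Ψ (0, ηstar)‖ ^ 2
          + ‖(kp • h (x 0) + ki • z 0) - leastSquaresMultiplier f h (Ψ (0, ηstar))‖ ^ 2) := by
  have hscale : kp * ρη / L₁ ≠ 0 := by positivity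
  have hhstar : h (Ψ (0, ηstar)) = 0 := congrArg Prod.fst (hright (0, ηstar))
  have hqstar : q (Ψ (0, ηstar)) = ηstar := congrArg Prod.snd (hright (0, ηstar))
  obtain ⟨C, r, hC, hr, hdecay⟩ := exists_exp_decay_of_isDissipativeError F₁ F₂
    (mul_pos hmlow hkp) (div_pos hki hkp) hρη
    (show 2 * (ki / kp) ≤ mlow * kp by rw [← mul_div_assoc, div_le_iff₀ hkp]; linarith)
  refine ⟨√((1 + LΨ ^ 2 * (1 / kp ^ 2 + 1 / (kp * ρη / L₁) ^ 2)) * C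
    * (1 + LΦ ^ 2 * (kp ^ 2 + (kp * ρη / L₁) ^ 2))), r / 2, by positivity, by positivity,
    fun x z H t ht => ?_⟩
  have herror := H.isDissipativeError (ηstar := ηstar) hh hq hkp hρη hL₁ hgain hgain'
    (fun x lam => by
      simpa only [mul_assoc] using inner_fderiv_constraint_lagrangianDescent_le hmlow (hcoerc x)
        (hmup x) (norm_apply_sub_apply_chart_le hleft hΨLip hφLip ηstar x) lam)
    (inner_fderiv_tangent_lagrangianDescent_le_of_chart hf hh hq hΨ hleft hright horth₁ horth₂
      hconv hcrit htrans)
  have hdecay_t := hdecay herror t ht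
  simp only [norm_smul, Real.norm_of_nonneg hkp.le,
    Real.norm_of_nonneg (show 0 ≤ kp * ρη / L₁ by positivity)] at hdecay_t
  refine sqrt_le_mul_exp_mul_sqrt (by positivity) hC.le (by positivity)
    (sq_add_sq_le_of_le_mul_sqrt hkp.ne' hscale (norm_nonneg _)
      (norm_sub_chart_le hleft hΨLip ηstar (x t)))
    hdecay_t (add_sq_add_sq_le_of_sqrt_le_mul kp (kp * ρη / L₁) ?_)
  simpa only [hhstar, hqstar, sub_zero] using hΦLip (x 0) (Ψ (0, ηstar))

end ConstrainedFlow

/-- Theorem 4: Explicit gain threshold for the PI dynamics.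
With `L_r = m̄ L₂ L_Ψ` and
`κ = 12 L_r/m̲ + 64 L_r²/m̲² + 8 L₁² L_r/(ρ_η² m̲) + 128 L₁² L_r²/(ρ_η² m̲²)`,
for every `k_p ≥ max {1, 2k_i/(k_p m̲), κ}` and `0 < k_i ≤ m̲ k_p²/2`, the PI dynamics
is globally exponentially stable at `(x*, λ*)`. -/
theorem pi_dynamics_explicit_gain_threshold
    (n m : ℕ) (hm : 1 ≤ m) (hmn : m < n)
    (f : EuclideanSpace ℝ (Fin n) → ℝ)
    (h : EuclideanSpace ℝ (Fin n) → EuclideanSpace ℝ (Fin m))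
    (q : EuclideanSpace ℝ (Fin n) → EuclideanSpace ℝ (Fin (n - m)))
    (Ψ : EuclideanSpace ℝ (Fin m) × EuclideanSpace ℝ (Fin (n - m)) → EuclideanSpace ℝ (Fin n))
    (hf : ContDiff ℝ 1 f) (hh : ContDiff ℝ 1 h) (hq : ContDiff ℝ 1 q)
    (hΨ : ContDiff ℝ 1 Ψ)
    (hleft : ∀ x, Ψ (h x, q x) = x)
    (hright : ∀ p, (h (Ψ p), q (Ψ p)) = p)
    (horth₁ : ∀ x, (fderiv ℝ q x) ∘L (ContinuousLinearMap.adjoint (fderiv ℝ q x))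
      = ContinuousLinearMap.id ℝ (EuclideanSpace ℝ (Fin (n - m))))
    (horth₂ : ∀ x, (fderiv ℝ q x) ∘L (ContinuousLinearMap.adjoint (fderiv ℝ h x)) = 0)
    -- (i) uniform full rank and uniform upper bound on the Gram map
    (mlow mup : ℝ) (hmlow : 0 < mlow)
    (hcoerc : ∀ (x : EuclideanSpace ℝ (Fin n)) (v : EuclideanSpace ℝ (Fin m)),
      ⟪(ContinuousLinearMap.adjoint (fderiv ℝ h x)) v,
        (ContinuousLinearMap.adjoint (fderiv ℝ h x)) v⟫ ≥ mlow * ‖v‖ ^ 2)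
    (hinv : ∀ x, IsUnit ((fderiv ℝ h x) ∘L (ContinuousLinearMap.adjoint (fderiv ℝ h x))))
    (hmup : ∀ x, ‖(fderiv ℝ h x) ∘L (ContinuousLinearMap.adjoint (fderiv ℝ h x))‖ ≤ mup)
    -- (ii) strong convexity of f̃ = f ∘ p on the constraint manifold
    (ρη : ℝ) (hρη : 0 < ρη)
    (hconv : ∀ u v : EuclideanSpace ℝ (Fin (n - m)),
      f (Ψ (0, v)) ≥ f (Ψ (0, u)) + ⟪gradient (fun η => f (Ψ (0, η))) u, v - u⟫
        + (ρη / 2) * ‖v - u‖ ^ 2)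
    (ηstar : EuclideanSpace ℝ (Fin (n - m)))
    (hcrit : gradient (fun η => f (Ψ (0, η))) ηstar = 0)
    (xstar : EuclideanSpace ℝ (Fin n)) (hxstar : xstar = Ψ (0, ηstar))
    -- (iii) global Lipschitz continuity of Φ and Φ⁻¹ (ℓ² product norm)
    (LΦ LΨ : ℝ)
    (hΦLip : ∀ x x' : EuclideanSpace ℝ (Fin n),
      Real.sqrt (‖h x - h x'‖ ^ 2 + ‖q x - q x'‖ ^ 2) ≤ LΦ * ‖x - x'‖)
    (hΨLip : ∀ p p' : EuclideanSpace ℝ (Fin m) × EuclideanSpace ℝ (Fin (n - m)),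
      ‖Ψ p - Ψ p'‖ ≤ LΨ * Real.sqrt (‖p.1 - p'.1‖ ^ 2 + ‖p.2 - p'.2‖ ^ 2))
    -- (iv) transverse Lipschitz bound
    (L₁ : ℝ) (hL₁ : 0 < L₁)
    (htrans : ∀ (y : EuclideanSpace ℝ (Fin m)) (η : EuclideanSpace ℝ (Fin (n - m))),
      ‖(fderiv ℝ q (Ψ (y, η))) (gradient f (Ψ (y, η)))
        - (fderiv ℝ q (Ψ (0, η))) (gradient f (Ψ (0, η)))‖ ≤ L₁ * ‖y‖)
    -- (v) the least-squares multiplier map φ is globally Lipschitz with constant L₂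
    (L₂ : ℝ)
    (hφLip : ∀ x₁ x₂ : EuclideanSpace ℝ (Fin n),
      ‖(-(Ring.inverse ((fderiv ℝ h x₁) ∘L (ContinuousLinearMap.adjoint (fderiv ℝ h x₁)))
            ((fderiv ℝ h x₁) (gradient f x₁))))
        - (-(Ring.inverse ((fderiv ℝ h x₂) ∘L (ContinuousLinearMap.adjoint (fderiv ℝ h x₂)))
            ((fderiv ℝ h x₂) (gradient f x₂))))‖ ≤ L₂ * ‖x₁ - x₂‖)
    (lamstar : EuclideanSpace ℝ (Fin m))
    (hlamstar : lamstar =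
      -(Ring.inverse ((fderiv ℝ h xstar) ∘L (ContinuousLinearMap.adjoint (fderiv ℝ h xstar)))
        ((fderiv ℝ h xstar) (gradient f xstar)))) :
    -- conclusion
    ∀ kp ki : ℝ,
      max (max 1 (2 * ki / (kp * mlow)))
        (12 * (mup * L₂ * LΨ) / mlow + 64 * (mup * L₂ * LΨ) ^ 2 / mlow ^ 2
          + 8 * L₁ ^ 2 * (mup * L₂ * LΨ) / (ρη ^ 2 * mlow)
          + 128 * L₁ ^ 2 * (mup * L₂ * LΨ) ^ 2 / (ρη ^ 2 * mlow ^ 2)) ≤ kp →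
      0 < ki → ki ≤ mlow * kp ^ 2 / 2 →
      ∃ cπ ρπ : ℝ, 0 < cπ ∧ 0 < ρπ ∧
        ∀ (x : ℝ → EuclideanSpace ℝ (Fin n)) (z : ℝ → EuclideanSpace ℝ (Fin m)),
          (∀ t, 0 ≤ t → HasDerivAt x
            (-gradient f (x t) - (ContinuousLinearMap.adjoint (fderiv ℝ h (x t)))
              (kp • h (x t) + ki • z t)) t) →
          (∀ t, 0 ≤ t → HasDerivAt z (h (x t)) t) →
          ∀ t, 0 ≤ t →
            Real.sqrt (‖x t - xstar‖ ^ 2 + ‖(kp • h (x t) + ki • z t) - lamstar‖ ^ 2)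
              ≤ cπ * Real.exp (-ρπ * t) *
                Real.sqrt (‖x 0 - xstar‖ ^ 2 + ‖(kp • h (x 0) + ki • z 0) - lamstar‖ ^ 2) := by
  intro kp ki hmax hki hkik
  have hdim : NeZero n := ⟨by omega⟩
  have hkp : 0 < kp := one_pos.trans_le ((le_max_left _ _).trans ((le_max_left _ _).trans hmax))
  obtain ⟨hgain, hgain'⟩ :=
    gain_bounds_of_threshold hmlow hρη hL₁ hkp.le ((le_max_right _ _).trans hmax)
  subst hxstar hlamstar
  obtain ⟨cπ, ρπ, hcπ, hρπ, hdecay⟩ := pi_dynamics_explicit_gain_threshold_general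
    (hf.differentiable one_ne_zero) (hh.differentiable one_ne_zero)
    (hq.differentiable one_ne_zero) (hΨ.differentiable one_ne_zero) hleft hright horth₁ horth₂
    hmlow hcoerc hmup hρη hconv hcrit hΦLip hΨLip hL₁ htrans hφLip hkp hki hkik hgain hgain'
  exact ⟨cπ, ρπ, hcπ, hρπ, fun x z hx hz => hdecay x z
    ⟨fun t ht => (hx t ht).hasDerivWithinAt, fun t ht => (hz t ht).hasDerivWithinAt⟩⟩
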